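/- arXiv:2402.17021 — 3 statements merged into one kernel-verified Lean document; each statement's English description precedes it below -/
import Mathlib

section
/- Fix real numbers v, w, s, t with s < t and v + s/2 < 0, and let j be a natural number with j < −2v − s. With q = q_N = exp(−2/√N), the limit as N → ∞ of [ (q^{−2v−s};q)_∞ (−q^{w+t+j+v};q)_∞ (−q^{w−j−v};q)_∞ (q^{t−s};q)_∞ ] / [ (−q^{w−v};q)_∞ (q^{t−s+j};q)_∞ (q^{−2v−s−j};q)_∞ (−q^{v+w+t};q)_∞ ] exists and equals Γ(t−s+j) Γ(−2v−s−j) / ( Γ(−2v−s) Γ(t−s) ). -/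
open Filter

/-- Infinite q-Pochhammer symbol `(a;q)_∞ = ∏_{k=0}^∞ (1 - a q^k)` for complex `a, q`. -/
noncomputable def qPochInf (a q : ℂ) : ℂ := ∏' k : ℕ, (1 - a * q ^ k)

/-- Weak asymmetry scaling `q_N = exp(-2/√N)`. -/
noncomputable def qN (N : ℕ) : ℝ := Real.exp (-2 / Real.sqrt N)

/-- Real powers of `q_N`: `q_N^x = exp(-2x/√N)`, as a complex number. -/
noncomputable def qpow (N : ℕ) (x : ℝ) : ℂ := Complex.ofReal (Real.exp (-2 * x / Real.sqrt N))

/-!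
The exponents in numerator and denominator match up in pairs differing by `j`, so every ratio of
infinite products telescopes to a finite one: `(a;q)_∞ / (a q^j;q)_∞ = (a;q)_j`. As `q → 1⁻`, the
factors `(1 - q^(x+k)) / (1 - q)` tend to `x + k`, hence `(q^x;q)_j / (1 - q)^j` tends to the rising
factorial `Γ(x + j) / Γ(x)`, while each `(-q^y;q)_j` tends to `2^j`. The powers of `1 - q` and those
of `2` cancel between the four ratios.
-/

open Complex Topology

/-- The finite q-Pochhammer symbol `(a;q)_n`, which splits off the first `n` factors of
`qPochInf a q`. -/
noncomputable def qPoch (a q : ℂ) (n : ℕ) : ℂ := ∏ k ∈ Finset.range n, (1 - a * q ^ k)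

section InfiniteProduct

variable {a q : ℂ}

lemma summable_norm_neg_mul_pow (a : ℂ) (hq : ‖q‖ < 1) :
    Summable fun k : ℕ => ‖-(a * q ^ k)‖ := by
  simpa only [norm_neg, norm_mul, norm_pow] using
    (summable_geometric_of_lt_one (norm_nonneg q) hq).mul_left ‖a‖

lemma multipliable_one_sub_mul_pow (a : ℂ) (hq : ‖q‖ < 1) :
    Multipliable fun k : ℕ => 1 - a * q ^ k := by
  simpa only [← sub_eq_add_neg] using
    multipliable_one_add_of_summable (summable_norm_neg_mul_pow a hq)

lemma qPochInf_ne_zero (hq : ‖q‖ < 1) (ha : ∀ k : ℕ, a * q ^ k ≠ 1) : qPochInf a q ≠ 0 := by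
  simp only [qPochInf, sub_eq_add_neg]
  refine tprod_one_add_ne_zero_of_summable (fun k => ?_) (summable_norm_neg_mul_pow a hq)
  simpa only [← sub_eq_add_neg] using sub_ne_zero.mpr (ha k).symm

lemma qPoch_mul_qPochInf (a : ℂ) (hq : ‖q‖ < 1) (n : ℕ) :
    qPoch a q n * qPochInf (a * q ^ n) q = qPochInf a q := by
  have shift (k : ℕ) : 1 - a * q ^ n * q ^ k = 1 - a * q ^ (k + n) := by ring
  simp only [qPoch, qPochInf, shift]
  refine Multipliable.prod_mul_tprod_nat_mul' (f := fun k : ℕ => 1 - a * q ^ k) ?_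
  simpa only [shift] using multipliable_one_sub_mul_pow (a * q ^ n) hq

lemma qPochInf_div_qPochInf (hq : ‖q‖ < 1) (n : ℕ) (ha : ∀ k : ℕ, a * q ^ n * q ^ k ≠ 1) :
    qPochInf a q / qPochInf (a * q ^ n) q = qPoch a q n := by
  rw [div_eq_iff (qPochInf_ne_zero hq ha), qPoch_mul_qPochInf a hq]

end InfiniteProduct

section ClassicalLimit

lemma ofReal_cpow_mul_pow {q : ℝ} (hq : 0 < q) (x : ℂ) (k : ℕ) :
    (q : ℂ) ^ x * (q : ℂ) ^ k = (q : ℂ) ^ (x + k) := by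
  rw [cpow_add _ _ (ofReal_ne_zero.mpr hq.ne'), cpow_natCast]

lemma eventually_mem_Ioo_zero_one : ∀ᶠ q : ℝ in 𝓝[<] 1, q ∈ Set.Ioo (0 : ℝ) 1 :=
  Ioo_mem_nhdsLT zero_lt_one

lemma tendsto_ofReal_cpow_one (x : ℂ) :
    Tendsto (fun q : ℝ => (q : ℂ) ^ x) (𝓝[<] 1) (𝓝 1) := by
  have h := (continuousAt_ofReal_cpow_const 1 x (Or.inr one_ne_zero)).tendsto
  rw [ofReal_one, one_cpow] at h
  exact h.mono_left nhdsWithin_le_nhds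

lemma tendsto_one_sub_cpow_div_one_sub (x : ℂ) :
    Tendsto (fun q : ℝ => (1 - (q : ℂ) ^ x) / (1 - q)) (𝓝[<] 1) (𝓝 x) := by
  have hderiv : HasDerivAt (fun q : ℝ => (q : ℂ) ^ x) x 1 := by
    simpa using ((hasDerivAt_id (1 : ℂ)).cpow_const (c := x) one_mem_slitPlane).comp_ofReal
      (z := 1)
  have hslope := (hasDerivAt_iff_tendsto_slope.mp hderiv).mono_left
    (nhdsWithin_mono 1 fun q (hq : q < 1) => hq.ne)
  refine hslope.congr fun q => ?_
  rw [slope_def_module, real_smul, ofReal_one, one_cpow, ← neg_sub (1 : ℂ), ← neg_sub (1 : ℝ)]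
  push_cast
  rw [inv_neg, neg_mul_neg, inv_mul_eq_div]

/-- Only finitely many factors can vanish near `q = 1`: as soon as `0 < re x + k`, the norm of
`ε * q ^ (x + k)` is less than `1`. -/
lemma eventually_forall_mul_cpow_mul_pow_ne_one {ε x : ℂ} (hε : ‖ε‖ ≤ 1)
    (h : ∀ k : ℕ, ∀ᶠ q : ℝ in 𝓝[<] 1, ε * (q : ℂ) ^ (x + k) ≠ 1) :
    ∀ᶠ q : ℝ in 𝓝[<] 1, ∀ k : ℕ, ε * (q : ℂ) ^ x * (q : ℂ) ^ k ≠ 1 := by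
  obtain ⟨K, hK⟩ := exists_nat_gt (-x.re)
  filter_upwards [eventually_mem_Ioo_zero_one,
    (eventually_all_finset (Finset.range K)).mpr fun k _ => h k] with q ⟨hq0, hq1⟩ hsmall k
  rw [mul_assoc, ofReal_cpow_mul_pow hq0]
  rcases lt_or_ge k K with hkK | hKk
  · exact hsmall k (Finset.mem_range.mpr hkK)
  · have hre : 0 < (x + k).re := by
      have : (K : ℝ) ≤ k := mod_cast hKk
      rw [add_re, natCast_re]
      linarith
    have hnorm : ‖ε * (q : ℂ) ^ (x + k)‖ < 1 := by
      rw [norm_mul, norm_cpow_eq_rpow_re_of_pos hq0]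
      exact mul_lt_one_of_nonneg_of_lt_one_right hε (by positivity)
        (Real.rpow_lt_one hq0.le hq1 hre)
    intro heq
    simp [heq] at hnorm

lemma eventually_forall_cpow_mul_pow_ne_one {x : ℂ} (hx : ∀ k : ℕ, x ≠ -k) :
    ∀ᶠ q : ℝ in 𝓝[<] 1, ∀ k : ℕ, (q : ℂ) ^ x * (q : ℂ) ^ k ≠ 1 := by
  have hfactor (k : ℕ) : ∀ᶠ q : ℝ in 𝓝[<] 1, 1 * (q : ℂ) ^ (x + k) ≠ 1 := by
    have hne : x + k ≠ 0 := fun h => hx k (eq_neg_of_add_eq_zero_left h)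
    filter_upwards [(tendsto_one_sub_cpow_div_one_sub (x + k)).eventually_ne hne] with q hq heq
    rw [one_mul] at heq
    simp [heq] at hq
  simpa only [one_mul] using eventually_forall_mul_cpow_mul_pow_ne_one norm_one.le hfactor

lemma eventually_forall_neg_cpow_mul_pow_ne_one (x : ℂ) :
    ∀ᶠ q : ℝ in 𝓝[<] 1, ∀ k : ℕ, -(q : ℂ) ^ x * (q : ℂ) ^ k ≠ 1 := by
  have hfactor (k : ℕ) : ∀ᶠ q : ℝ in 𝓝[<] 1, -1 * (q : ℂ) ^ (x + k) ≠ 1 :=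
    ((tendsto_ofReal_cpow_one (x + k)).const_mul (-1)).eventually_ne (by norm_num)
  simpa only [neg_one_mul] using eventually_forall_mul_cpow_mul_pow_ne_one (by simp) hfactor

lemma tendsto_qPoch_cpow_div_pow (x : ℂ) (n : ℕ) :
    Tendsto (fun q : ℝ => qPoch ((q : ℂ) ^ x) q n / (1 - q) ^ n) (𝓝[<] 1)
      (𝓝 ((ascPochhammer ℂ n).eval x)) := by
  induction n with
  | zero => simp [qPoch]
  | succ n ih =>
    rw [ascPochhammer_succ_eval]
    refine (ih.mul (tendsto_one_sub_cpow_div_one_sub (x + n))).congr' ?_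
    filter_upwards [eventually_mem_Ioo_zero_one] with q ⟨hq0, _⟩
    rw [qPoch, qPoch, Finset.prod_range_succ, ofReal_cpow_mul_pow hq0, pow_succ, div_mul_div_comm]

lemma tendsto_qPoch_neg_cpow (x : ℂ) (n : ℕ) :
    Tendsto (fun q : ℝ => qPoch (-(q : ℂ) ^ x) q n) (𝓝[<] 1) (𝓝 (2 ^ n)) := by
  have hfactor (k : ℕ) :
      Tendsto (fun q : ℝ => 1 - -(q : ℂ) ^ x * (q : ℂ) ^ k) (𝓝[<] 1) (𝓝 2) := by
    have h := ((tendsto_ofReal_cpow_one x).neg.mul (tendsto_ofReal_cpow_one k)).const_sub 1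
    simp only [cpow_natCast] at h
    convert h using 2
    norm_num
  simpa [qPoch] using tendsto_finsetProd (Finset.range n) fun k _ => hfactor k

lemma tendsto_qPochInf_cpow_ratio {x : ℂ} (hx : ∀ k : ℕ, x ≠ -k) (n : ℕ) :
    Tendsto (fun q : ℝ =>
        qPochInf ((q : ℂ) ^ x) q / qPochInf ((q : ℂ) ^ (x + n)) q / (1 - q) ^ n)
      (𝓝[<] 1) (𝓝 (Gamma (x + n) / Gamma x)) := by
  rw [Gamma_add_nat_div_Gamma_eq x hx]
  refine (tendsto_qPoch_cpow_div_pow x n).congr' ?_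
  filter_upwards [eventually_mem_Ioo_zero_one, eventually_forall_cpow_mul_pow_ne_one hx]
    with q ⟨hq0, hq1⟩ hne
  rw [← ofReal_cpow_mul_pow hq0, qPochInf_div_qPochInf]
  · rwa [norm_real, Real.norm_of_nonneg hq0.le]
  · intro k
    simpa only [mul_assoc, ← pow_add] using hne (n + k)

lemma tendsto_qPochInf_neg_cpow_ratio (x : ℂ) (n : ℕ) :
    Tendsto (fun q : ℝ => qPochInf (-(q : ℂ) ^ x) q / qPochInf (-(q : ℂ) ^ (x + n)) q)
      (𝓝[<] 1) (𝓝 (2 ^ n)) := by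
  refine (tendsto_qPoch_neg_cpow x n).congr' ?_
  filter_upwards [eventually_mem_Ioo_zero_one, eventually_forall_neg_cpow_mul_pow_ne_one x]
    with q ⟨hq0, hq1⟩ hne
  rw [← ofReal_cpow_mul_pow hq0, ← neg_mul, qPochInf_div_qPochInf]
  · rwa [norm_real, Real.norm_of_nonneg hq0.le]
  · intro k
    simpa only [mul_assoc, ← pow_add] using hne (n + k)

end ClassicalLimit

section WeakAsymmetry

lemma qpow_eq_cpow (N : ℕ) (x : ℝ) : qpow N x = (qN N : ℂ) ^ (x : ℂ) := by
  rw [qN, qpow, ← ofReal_cpow (Real.exp_pos _).le, ← Real.exp_mul, div_mul_eq_mul_div]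

lemma ofReal_ne_neg_natCast {x : ℝ} (hx : 0 < x) (k : ℕ) : (x : ℂ) ≠ -k := by
  intro h
  have hre : x = -(k : ℝ) := by simpa using congrArg re h
  linarith [k.cast_nonneg (α := ℝ)]

lemma tendsto_qN : Tendsto qN atTop (𝓝[<] 1) := by
  have hsqrt : Tendsto (fun N : ℕ => √(N : ℝ)) atTop atTop :=
    Real.tendsto_sqrt_atTop.comp tendsto_natCast_atTop_atTop
  refine tendsto_nhdsWithin_iff.mpr ⟨?_, ?_⟩
  · rw [← Real.exp_zero]
    exact (hsqrt.const_div_atTop (-2)).rexp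
  · filter_upwards [hsqrt.eventually_gt_atTop 0] with N hN
    exact Real.exp_lt_one_iff.mpr (div_neg_of_neg_of_pos (by norm_num) hN)

end WeakAsymmetry

theorem statement6_general (v w s t : ℂ) (j : ℕ) (hts : ∀ k : ℕ, t - s ≠ -k)
    (hvs : ∀ k : ℕ, -2 * v - s - j ≠ -k) :
    Tendsto (fun q : ℝ =>
      (qPochInf ((q : ℂ) ^ (-2 * v - s)) q * qPochInf (-(q : ℂ) ^ (w + t + j + v)) q *
       qPochInf (-(q : ℂ) ^ (w - j - v)) q * qPochInf ((q : ℂ) ^ (t - s)) q) /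
      (qPochInf (-(q : ℂ) ^ (w - v)) q * qPochInf ((q : ℂ) ^ (t - s + j)) q *
       qPochInf ((q : ℂ) ^ (-2 * v - s - j)) q * qPochInf (-(q : ℂ) ^ (v + w + t)) q))
      (𝓝[<] 1)
      (𝓝 (Gamma (t - s + j) * Gamma (-2 * v - s - j) / (Gamma (-2 * v - s) * Gamma (t - s)))) := by
  have hΓ : Gamma (-2 * v - s) / Gamma (-2 * v - s - j) ≠ 0 := by
    refine div_ne_zero (Gamma_ne_zero fun k h => hvs (k + j) ?_) (Gamma_ne_zero hvs)
    rw [h]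
    push_cast
    ring
  have hplus := tendsto_qPochInf_cpow_ratio hvs j
  have hminus := tendsto_qPochInf_neg_cpow_ratio (w - j - v) j
  rw [sub_add_cancel] at hplus
  rw [show w - j - v + j = w - v by ring] at hminus
  have hlim := ((tendsto_qPochInf_cpow_ratio hts j).div hplus hΓ).mul
    (hminus.div (tendsto_qPochInf_neg_cpow_ratio (v + w + t) j) (by simp))
  rw [div_self (by simp), mul_one, div_div_div_eq, mul_comm (Gamma (t - s))] at hlim
  refine hlim.congr' ?_
  filter_upwards [eventually_mem_Ioo_zero_one] with q ⟨_, hq1⟩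
  have hscale : (1 - (q : ℂ)) ^ j ≠ 0 := pow_ne_zero j (mod_cast (sub_pos.mpr hq1).ne')
  simp only [Pi.div_apply]
  rw [div_div_div_cancel_right₀ hscale, show v + w + t + j = w + t + j + v by ring]
  simp only [div_eq_mul_inv, mul_inv, inv_inv]
  ring

theorem statement6 (v w s t : ℝ) (j : ℕ) (hst : s < t) (hv : v + s / 2 < 0)
    (hj : (j : ℝ) < -2 * v - s) :
    Tendsto (fun N : ℕ =>
      (qPochInf (qpow N (-2 * v - s)) (qN N) * qPochInf (-(qpow N (w + t + j + v))) (qN N) *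
       qPochInf (-(qpow N (w - j - v))) (qN N) * qPochInf (qpow N (t - s)) (qN N)) /
      (qPochInf (-(qpow N (w - v))) (qN N) * qPochInf (qpow N (t - s + j)) (qN N) *
       qPochInf (qpow N (-2 * v - s - j)) (qN N) * qPochInf (-(qpow N (v + w + t))) (qN N)))
      atTop
      (nhds (Complex.Gamma ((t - s + j : ℝ) : ℂ) * Complex.Gamma ((-2 * v - s - j : ℝ) : ℂ) /
        (Complex.Gamma ((-2 * v - s : ℝ) : ℂ) * Complex.Gamma ((t - s : ℝ) : ℂ)))) := by
  have hts (k : ℕ) : (t - s : ℂ) ≠ -k := mod_cast ofReal_ne_neg_natCast (sub_pos.mpr hst) k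
  have hvs (k : ℕ) : (-2 * v - s - j : ℂ) ≠ -k := by
    simpa using ofReal_ne_neg_natCast (sub_pos.mpr hj) k
  simpa [qpow_eq_cpow, Function.comp_def] using
    (statement6_general v w s t j hts hvs).comp tendsto_qN
end

section
/- Fix real numbers u, v, w, r, t with u+v+w+r not a nonpositive integer, and let N be a positive integer with q = q_N = exp(−2/√N). For y ∈ (0, 4N) set θ_y = arccos(1 − y/(2N)) and define f_{v,w,u,r}(y) := [ (q;q)_∞ (−q^{v+w+t};q)_∞ (q^{u+v};q)_∞ (−q^{v+r};q)_∞ (−q^{u+w};q)_∞ (q^{w+r};q)_∞ (−q^{u+r−t};q)_∞ · (e^{2iθ_y};q)_∞ (e^{−2iθ_y};q)_∞ ] / [ 4πN (q^{u+v+w+r};q)_∞ √(y/N) √(1 − y/(4N)) · ∏_{σ∈{+1,−1}} (q^{v+t/2} e^{σiθ_y};q)_∞ (−q^{w+t/2} e^{σiθ_y};q)_∞ (q^{u−t/2} e^{σiθ_y};q)_∞ (−q^{r−t/2} e^{σiθ_y};q)_∞ ]. Then for every y ∈ (0, 4N) one has the symmetry f_{v,w,u,r}(y) = f_{w,v,r,u}(4N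 − y), where f_{w,v,r,u} is obtained from f_{v,w,u,r} by simultaneously exchanging v ↔ w and u ↔ r. -/
open Filter

/-- `e^{ix}` for real `x`. -/
noncomputable def eI (x : ℝ) : ℂ := Complex.exp (Complex.I * x)

/-- The continuous density `f_{v,w,u,r}(y)` of the rescaled (tangent) Askey–Wilson marginal
law at time `q^t` with parameters `(q^v, −q^w, q^u, −q^r, q_N)`. -/
noncomputable def awTangentDensity (N : ℕ) (t v w u r y : ℝ) : ℂ :=
  (qPochInf (Complex.ofReal (qN N)) (qN N) * qPochInf (-(qpow N (v + w + t))) (qN N) *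
   qPochInf (qpow N (u + v)) (qN N) * qPochInf (-(qpow N (v + r))) (qN N) *
   qPochInf (-(qpow N (u + w))) (qN N) * qPochInf (qpow N (w + r)) (qN N) *
   qPochInf (-(qpow N (u + r - t))) (qN N) *
   qPochInf (eI (2 * Real.arccos (1 - y / (2 * (N : ℝ))))) (qN N) *
   qPochInf (eI (-2 * Real.arccos (1 - y / (2 * (N : ℝ))))) (qN N)) /
  (Complex.ofReal (4 * Real.pi * (N : ℝ)) * qPochInf (qpow N (u + v + w + r)) (qN N) *
   Complex.ofReal (Real.sqrt (y / (N : ℝ))) * Complex.ofReal (Real.sqrt (1 - y / (4 * (N : ℝ)))) *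
   ((qPochInf (qpow N (v + t / 2) * eI (Real.arccos (1 - y / (2 * (N : ℝ))))) (qN N) *
     qPochInf (-(qpow N (w + t / 2)) * eI (Real.arccos (1 - y / (2 * (N : ℝ))))) (qN N) *
     qPochInf (qpow N (u - t / 2) * eI (Real.arccos (1 - y / (2 * (N : ℝ))))) (qN N) *
     qPochInf (-(qpow N (r - t / 2)) * eI (Real.arccos (1 - y / (2 * (N : ℝ))))) (qN N)) *
    (qPochInf (qpow N (v + t / 2) * eI (-(Real.arccos (1 - y / (2 * (N : ℝ)))))) (qN N) *
     qPochInf (-(qpow N (w + t / 2)) * eI (-(Real.arccos (1 - y / (2 * (N : ℝ)))))) (qN N) *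
     qPochInf (qpow N (u - t / 2) * eI (-(Real.arccos (1 - y / (2 * (N : ℝ)))))) (qN N) *
     qPochInf (-(qpow N (r - t / 2)) * eI (-(Real.arccos (1 - y / (2 * (N : ℝ)))))) (qN N))))

/-!
Put `x = cos θ_y = 1 - y / (2 * N)`. The product `√(y / N) * √(1 - y / (4 * N))` is `sin θ_y`, so
`f_{v,w,u,r}` is, up to the Jacobian `1 / (2 * N)`, the classical Askey–Wilson density with
parameters `q^(v + t / 2)`, `-q^(w + t / 2)`, `q^(u - t / 2)`, `-q^(r - t / 2)`. That density is
symmetric in its parameters and invariant under negating all of them together with `x`. The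
reflection `y ↦ 4 * N - y` negates `x`, and negating the parameters exchanges the roles of `v` and
`w` and those of `u` and `r`.
-/

theorem eI_neg (θ : ℝ) : eI (-θ) = (eI θ)⁻¹ := by
  simp only [eI, Complex.ofReal_neg, mul_neg, Complex.exp_neg]

theorem eI_two_mul (θ : ℝ) : eI (2 * θ) = eI θ ^ 2 := by
  rw [eI, eI, ← Complex.exp_nat_mul]
  push_cast
  ring_nf

theorem eI_pi_sub (θ : ℝ) : eI (Real.pi - θ) = -(eI θ)⁻¹ := by
  rw [← eI_neg, eI, eI, sub_eq_add_neg, Complex.ofReal_add, mul_add, Complex.exp_add,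
    mul_comm Complex.I (Real.pi : ℂ), Complex.exp_pi_mul_I, neg_one_mul]

theorem qpow_add (N : ℕ) (x y : ℝ) : qpow N (x + y) = qpow N x * qpow N y := by
  rw [qpow, qpow, qpow, ← Complex.ofReal_mul, ← Real.exp_add]
  ring_nf

/-- The Askey–Wilson weight at `x = (z + z⁻¹) / 2`, as a function of `z` and without the factor
`1 / √(1 - x ^ 2)`, which enters in `askeyWilsonDensity`. -/
noncomputable def askeyWilsonWeight (a b c d q z : ℂ) : ℂ :=
  qPochInf (z ^ 2) q * qPochInf (z⁻¹ ^ 2) q /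
    ((qPochInf (a * z) q * qPochInf (b * z) q * qPochInf (c * z) q * qPochInf (d * z) q) *
     (qPochInf (a * z⁻¹) q * qPochInf (b * z⁻¹) q * qPochInf (c * z⁻¹) q * qPochInf (d * z⁻¹) q))

/-- The constant that normalizes the Askey–Wilson weight, up to the factor `1 / (2 * π)`. -/
noncomputable def askeyWilsonConst (a b c d q : ℂ) : ℂ :=
  qPochInf q q * qPochInf (a * b) q * qPochInf (a * c) q * qPochInf (a * d) q *
    qPochInf (b * c) q * qPochInf (b * d) q * qPochInf (c * d) q / qPochInf (a * b * c * d) q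

/-- The density, with respect to `dx`, of the absolutely continuous part of the Askey–Wilson law
with parameters `a, b, c, d`, at the point `x = cos θ` for `0 < θ < π`. -/
noncomputable def askeyWilsonDensity (a b c d q : ℂ) (θ : ℝ) : ℂ :=
  askeyWilsonConst a b c d q * askeyWilsonWeight a b c d q (eI θ) / (2 * Real.pi * Real.sin θ)

section AskeyWilson

variable (a b c d q : ℂ)

theorem askeyWilsonWeight_neg (z : ℂ) :
    askeyWilsonWeight (-a) (-b) (-c) (-d) q (-z) = askeyWilsonWeight a b c d q z := by
  simp only [askeyWilsonWeight, inv_neg, neg_mul_neg, even_two.neg_pow]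

theorem askeyWilsonWeight_inv (z : ℂ) :
    askeyWilsonWeight a b c d q z⁻¹ = askeyWilsonWeight a b c d q z := by
  rw [askeyWilsonWeight, askeyWilsonWeight, inv_inv]
  ring

theorem askeyWilsonConst_neg :
    askeyWilsonConst (-a) (-b) (-c) (-d) q = askeyWilsonConst a b c d q := by
  simp only [askeyWilsonConst, neg_mul, mul_neg, neg_neg]

theorem askeyWilsonDensity_neg_pi_sub (θ : ℝ) :
    askeyWilsonDensity (-a) (-b) (-c) (-d) q (Real.pi - θ) = askeyWilsonDensity a b c d q θ := by
  rw [askeyWilsonDensity, askeyWilsonDensity, askeyWilsonConst_neg, eI_pi_sub,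
    askeyWilsonWeight_neg, askeyWilsonWeight_inv, Real.sin_pi_sub]

theorem askeyWilsonDensity_swap_first_two (θ : ℝ) :
    askeyWilsonDensity b a c d q θ = askeyWilsonDensity a b c d q θ := by
  rw [askeyWilsonDensity, askeyWilsonDensity, askeyWilsonConst, askeyWilsonConst,
    askeyWilsonWeight, askeyWilsonWeight, mul_comm b a]
  ring

theorem askeyWilsonDensity_swap_last_two (θ : ℝ) :
    askeyWilsonDensity a b d c q θ = askeyWilsonDensity a b c d q θ := by
  rw [askeyWilsonDensity, askeyWilsonDensity, askeyWilsonConst, askeyWilsonConst,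
    askeyWilsonWeight, askeyWilsonWeight, mul_comm d c, mul_right_comm (a * b) d c]
  ring

end AskeyWilson

theorem sin_arccos_one_sub_div_two_mul {y N : ℝ} (h : 0 ≤ y / N) :
    Real.sin (Real.arccos (1 - y / (2 * N))) = √(y / N) * √(1 - y / (4 * N)) := by
  rw [Real.sin_arccos, ← Real.sqrt_mul h]
  ring_nf

theorem arccos_one_sub_reflect {N : ℝ} (hN : N ≠ 0) (y : ℝ) :
    Real.arccos (1 - (4 * N - y) / (2 * N)) = Real.pi - Real.arccos (1 - y / (2 * N)) := by
  rw [← Real.arccos_neg]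
  congr 1
  field_simp
  ring

theorem askeyWilsonConst_qpow (N : ℕ) (t v w u r : ℝ) (q : ℂ) :
    askeyWilsonConst (qpow N (v + t / 2)) (-qpow N (w + t / 2)) (qpow N (u - t / 2))
        (-qpow N (r - t / 2)) q =
      qPochInf q q * qPochInf (-qpow N (v + w + t)) q * qPochInf (qpow N (u + v)) q *
        qPochInf (-qpow N (v + r)) q * qPochInf (-qpow N (u + w)) q *
        qPochInf (qpow N (w + r)) q * qPochInf (-qpow N (u + r - t)) q /
        qPochInf (qpow N (u + v + w + r)) q := by
  simp only [askeyWilsonConst, neg_mul, mul_neg, neg_neg, ← qpow_add]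
  ring_nf

theorem awTangentDensity_eq_askeyWilsonDensity (N : ℕ) (t v w u r : ℝ) {y : ℝ} (hy : 0 ≤ y) :
    awTangentDensity N t v w u r y =
      askeyWilsonDensity (qpow N (v + t / 2)) (-qpow N (w + t / 2)) (qpow N (u - t / 2))
        (-qpow N (r - t / 2)) (qN N) (Real.arccos (1 - y / (2 * (N : ℝ)))) / (2 * (N : ℂ)) := by
  rw [awTangentDensity, askeyWilsonDensity, askeyWilsonConst_qpow, askeyWilsonWeight,
    sin_arccos_one_sub_div_two_mul (div_nonneg hy N.cast_nonneg), neg_mul 2, eI_neg, eI_neg,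
    eI_two_mul, inv_pow]
  push_cast
  ring

theorem statement7 (u v w r t : ℝ) (h : ∀ n : ℕ, u + v + w + r ≠ -(n : ℝ))
    (N : ℕ) (hN : 0 < N) (y : ℝ) (hy0 : 0 < y) (hy4 : y < 4 * (N : ℝ)) :
    awTangentDensity N t v w u r y = awTangentDensity N t w v r u (4 * (N : ℝ) - y) := by
  have hN' : (N : ℝ) ≠ 0 := Nat.cast_ne_zero.mpr hN.ne'
  rw [awTangentDensity_eq_askeyWilsonDensity N t v w u r hy0.le,
    awTangentDensity_eq_askeyWilsonDensity N t w v r u (sub_nonneg.mpr hy4.le),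
    arccos_one_sub_reflect hN', ← askeyWilsonDensity_neg_pi_sub,
    askeyWilsonDensity_swap_first_two, askeyWilsonDensity_swap_last_two, neg_neg, neg_neg]
end

section
/- For every η > 1 there exist a positive integer N₀ and constants C, χ > 0 such that for all integers N > N₀ and all real y ∈ [0, 2N]: 0 ≤ ( √N · arccos(1 − y/(2N)) − √y ) · log N ≤ C · N^{−χ} · (1 + √y)^η. -/
open Filter

/-!
The half-angle formula `arccos (1 - 2 * x ^ 2) = 2 * arcsin x` at `x = √y / (2 * √N)` turns the
error `√N * arccos (1 - y / (2 * N)) - √y` into `2 * √N * (arcsin x - x)`, which is nonnegative.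
Since `arcsin x - x` is cubic at `0` and `0 ≤ x ≤ 1`, it is at most `x ^ p` for every `p ≤ 3`, so
the error is at most `N ^ ((1 - p) / 2) * √y ^ p`. Any `1 < p ≤ η` leaves a negative power of `N`,
half of which absorbs `log N`.
-/

section

open Real

lemma arccos_one_sub_two_mul_sq {x : ℝ} (hx₀ : 0 ≤ x) (hx₁ : x ≤ 1) :
    arccos (1 - 2 * x ^ 2) = 2 * arcsin x := by
  have hcos : cos (2 * arcsin x) = 1 - 2 * x ^ 2 := by
    rw [cos_two_mul_eq_one_sub, sin_arcsin (by linarith) hx₁]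
  have hnonneg : 0 ≤ arcsin x := arcsin_nonneg.2 hx₀
  have hle : arcsin x ≤ π / 2 := arcsin_le_pi_div_two x
  rw [← hcos, arccos_cos (by linarith) (by linarith)]

lemma self_le_arcsin {x : ℝ} (hx₀ : 0 ≤ x) (hx₁ : x ≤ 1) : x ≤ arcsin x := by
  simpa only [sin_arcsin (by linarith : -1 ≤ x) hx₁] using sin_le (arcsin_nonneg.2 hx₀)

lemma arcsin_le_pi_div_two_mul {x : ℝ} (hx₀ : 0 ≤ x) (hx₁ : x ≤ 1) : arcsin x ≤ π / 2 * x := by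
  have hjordan : 2 / π * arcsin x ≤ x := by
    simpa only [sin_arcsin (by linarith : -1 ≤ x) hx₁] using
      mul_le_sin (arcsin_nonneg.2 hx₀) (arcsin_le_pi_div_two x)
  calc arcsin x = π / 2 * (2 / π * arcsin x) := by field_simp
    _ ≤ π / 2 * x := by gcongr

lemma arcsin_sub_self_le_pow_three {x : ℝ} (hx₀ : 0 ≤ x) (hx₁ : x ≤ 1) :
    arcsin x - x ≤ x ^ 3 := by
  have hnonneg : 0 ≤ arcsin x := arcsin_nonneg.2 hx₀
  have hcubic : arcsin x - arcsin x ^ 3 / 6 ≤ x := by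
    simpa only [sin_arcsin (by linarith : -1 ≤ x) hx₁] using sin_ge_sub_cube hnonneg
  have hpi : π / 2 ≤ 8 / 5 := by linarith [pi_lt_d2]
  calc arcsin x - x ≤ arcsin x ^ 3 / 6 := by linarith
    _ ≤ (π / 2 * x) ^ 3 / 6 := by gcongr; exact arcsin_le_pi_div_two_mul hx₀ hx₁
    _ ≤ (8 / 5 * x) ^ 3 / 6 := by gcongr
    _ ≤ x ^ 3 := by linarith [pow_nonneg hx₀ 3]

lemma arcsin_sub_self_le_rpow {x p : ℝ} (hx₀ : 0 ≤ x) (hx₁ : x ≤ 1) (hp₀ : 0 ≤ p) (hp₃ : p ≤ 3) :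
    arcsin x - x ≤ x ^ p :=
  calc arcsin x - x ≤ x ^ 3 := arcsin_sub_self_le_pow_three hx₀ hx₁
    _ = x ^ (3 : ℝ) := by norm_cast
    _ ≤ x ^ p := rpow_le_rpow_of_exponent_ge' hx₀ hx₁ hp₀ hp₃

lemma rpow_mul_log_le {x ε : ℝ} (hx : 0 < x) (hε : 0 < ε) (a : ℝ) :
    x ^ a * log x ≤ ε⁻¹ * x ^ (a + ε) :=
  calc x ^ a * log x ≤ x ^ a * (x ^ ε / ε) := by gcongr; exact log_le_rpow_div hx.le hε
    _ = ε⁻¹ * x ^ (a + ε) := by rw [rpow_add hx]; ring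

lemma rpow_le_one_add_rpow {x p q : ℝ} (hx : 0 ≤ x) (hp : 0 ≤ p) (hpq : p ≤ q) :
    x ^ p ≤ (1 + x) ^ q :=
  calc x ^ p ≤ (1 + x) ^ p := by gcongr; linarith
    _ ≤ (1 + x) ^ q := rpow_le_rpow_of_exponent_le (by linarith) hpq

/-- The error `E_N^θ(y)` in the approximation `√N θ ≈ √y` of the angle
`θ = arccos (1 - y / (2 N))` from the Askey–Wilson densities. The parameter `N` is real, and
`0 ≤ y ≤ 4 N` is the range where the argument of `arccos` lies in `[-1, 1]`. -/
noncomputable def angleError (N y : ℝ) : ℝ :=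
  √N * arccos (1 - y / (2 * N)) - √y

variable {N y : ℝ}

lemma sqrt_div_two_mul_sqrt_le_one (hN : 0 < N) (hyN : y ≤ 4 * N) : √y / (2 * √N) ≤ 1 := by
  rw [div_le_one (by positivity), sqrt_le_left (by positivity), mul_pow, sq_sqrt hN.le]
  linarith

lemma angleError_eq (hN : 0 < N) (hy : 0 ≤ y) (hyN : y ≤ 4 * N) :
    angleError N y = 2 * √N * (arcsin (√y / (2 * √N)) - √y / (2 * √N)) := by
  have hsq : 1 - y / (2 * N) = 1 - 2 * (√y / (2 * √N)) ^ 2 := by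
    rw [div_pow, mul_pow, sq_sqrt hy, sq_sqrt hN.le]
    field_simp
  rw [angleError, hsq,
    arccos_one_sub_two_mul_sq (by positivity) (sqrt_div_two_mul_sqrt_le_one hN hyN)]
  field_simp

lemma angleError_nonneg (hN : 0 < N) (hy : 0 ≤ y) (hyN : y ≤ 4 * N) : 0 ≤ angleError N y := by
  rw [angleError_eq hN hy hyN]
  exact mul_nonneg (by positivity) <| sub_nonneg.2 <|
    self_le_arcsin (by positivity) (sqrt_div_two_mul_sqrt_le_one hN hyN)

lemma angleError_le {p : ℝ} (hN : 0 < N) (hy : 0 ≤ y) (hyN : y ≤ 4 * N)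
    (hp₁ : 1 ≤ p) (hp₃ : p ≤ 3) : angleError N y ≤ N ^ ((1 - p) / 2) * √y ^ p := by
  have hsqrt : 0 < √N := sqrt_pos.2 hN
  calc angleError N y = 2 * √N * (arcsin (√y / (2 * √N)) - √y / (2 * √N)) :=
        angleError_eq hN hy hyN
    _ ≤ 2 * √N * (√y / (2 * √N)) ^ p := by
        gcongr
        exact arcsin_sub_self_le_rpow (by positivity) (sqrt_div_two_mul_sqrt_le_one hN hyN)
          (by linarith) hp₃
    _ = (2 * √N) ^ (1 - p) * √y ^ p := by
        rw [div_rpow (by positivity) (by positivity), rpow_sub (by positivity), rpow_one]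
        ring
    _ ≤ √N ^ (1 - p) * √y ^ p := by
        gcongr ?_ * _
        exact rpow_le_rpow_of_nonpos hsqrt (by linarith) (by linarith)
    _ = N ^ ((1 - p) / 2) * √y ^ p := by
        rw [sqrt_eq_rpow N, ← rpow_mul hN.le, one_div_mul_eq_div]

lemma angleError_mul_log_le {p χ : ℝ} (hN : 1 ≤ N) (hy : 0 ≤ y) (hyN : y ≤ 4 * N)
    (hp₁ : 1 ≤ p) (hp₃ : p ≤ 3) (hχ : 0 < χ) :
    angleError N y * log N ≤ χ⁻¹ * N ^ ((1 - p) / 2 + χ) * √y ^ p := by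
  have hN₀ : 0 < N := by linarith
  have hlog : 0 ≤ log N := log_nonneg hN
  calc angleError N y * log N ≤ N ^ ((1 - p) / 2) * √y ^ p * log N := by
        gcongr
        exact angleError_le hN₀ hy hyN hp₁ hp₃
    _ = N ^ ((1 - p) / 2) * log N * √y ^ p := by ring
    _ ≤ χ⁻¹ * N ^ ((1 - p) / 2 + χ) * √y ^ p := by
        gcongr ?_ * _
        exact rpow_mul_log_le hN₀ hχ _

theorem statement13_general (η : ℝ) (hη : 1 < η) :
    ∃ C > (0 : ℝ), ∃ χ > (0 : ℝ), ∀ N : ℝ, 1 ≤ N → ∀ y : ℝ, 0 ≤ y → y ≤ 4 * N →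
      0 ≤ angleError N y * log N ∧
      angleError N y * log N ≤ C * N ^ (-χ) * (1 + √y) ^ η := by
  obtain ⟨p, hp₁, hp₃, hpη⟩ : ∃ p : ℝ, 1 < p ∧ p ≤ 3 ∧ p ≤ η :=
    ⟨min η 3, lt_min hη (by norm_num), min_le_right _ _, min_le_left _ _⟩
  obtain ⟨χ, hχ, hexp⟩ : ∃ χ : ℝ, 0 < χ ∧ (1 - p) / 2 + χ = -χ :=
    ⟨(p - 1) / 4, by linarith, by ring⟩
  refine ⟨χ⁻¹, inv_pos.2 hχ, χ, hχ, fun N hN y hy hyN ↦ ⟨?_, ?_⟩⟩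
  · exact mul_nonneg (angleError_nonneg (by linarith) hy hyN) (log_nonneg hN)
  · calc angleError N y * log N ≤ χ⁻¹ * N ^ (-χ) * √y ^ p := by
          rw [← hexp]
          exact angleError_mul_log_le hN hy hyN hp₁.le hp₃ hχ
      _ ≤ χ⁻¹ * N ^ (-χ) * (1 + √y) ^ η := by
          gcongr ?_ * ?_
          exact rpow_le_one_add_rpow (sqrt_nonneg y) (by linarith) hpη

end

theorem statement13 (η : ℝ) (hη : 1 < η) :
    ∃ N₀ : ℕ, ∃ C > (0 : ℝ), ∃ χ > (0 : ℝ), ∀ N : ℕ, N₀ < N → ∀ y : ℝ, 0 ≤ y → y ≤ 2 * (N : ℝ) →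
      0 ≤ (Real.sqrt N * Real.arccos (1 - y / (2 * (N : ℝ))) - Real.sqrt y) * Real.log N ∧
      (Real.sqrt N * Real.arccos (1 - y / (2 * (N : ℝ))) - Real.sqrt y) * Real.log N ≤
        C * (N : ℝ) ^ (-χ) * (1 + Real.sqrt y) ^ η := by
  obtain ⟨C, hC, χ, hχ, hbound⟩ := statement13_general η hη
  exact ⟨0, C, hC, χ, hχ, fun N hN y hy hyN ↦
    hbound N (Nat.one_le_cast.2 hN) y hy (by linarith)⟩
end
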